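/- Let X be an implicative-orthomodular algebra. For all x, y ∈ X: (i) x ≤ y if and only if y ⊓ x = x; (ii) if x ≤_Q y and y ≤ x then x = y. -/

import Mathlib

/-! Exchange and involutivity give contraposition `x* → y* = y → x`, so that
`y ⊓ x = ((x → y) → x*)*`. If `x → y = 1`, this is `x** = x`. Conversely, put `u = x → y`; then
`y ⊓ x = x` says `u → x* = x*`, whence
`1 = u → u = x → (u → y) = x → (y* → u*) = y* → (u → x*) = y* → x* = x → y`.
For (ii), `y ≤ x` gives `x ⊓ y = y` by (i), while `x ≤_Q y` says `x = x ⊓ y`. -/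

/-- An involutive BE algebra `(X, →, 0, 1)`. -/
structure InvBE (X : Type*) where
  imp : X → X → X
  one : X
  zero : X
  imp_self : ∀ x, imp x x = one
  imp_one : ∀ x, imp x one = one
  one_imp : ∀ x, imp one x = x
  exchange : ∀ x y z, imp x (imp y z) = imp y (imp x z)
  zero_imp : ∀ x, imp zero x = one
  imp_involutive : ∀ x, imp (imp x zero) zero = x

namespace InvBE

variable {X : Type*} (A : InvBE X)

/-- `x* := x → 0`. -/
def neg (x : X) : X := A.imp x A.zero

/-- `x ⊓ y := ((x* → y*) → y*)*`. -/
def inf (x y : X) : X := A.neg (A.imp (A.imp (A.neg x) (A.neg y)) (A.neg y))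

/-- `x ∪ y := (x → y) → y`. -/
def sup (x y : X) : X := A.imp (A.imp x y) y

/-- `x ⊙ y := (x → y*)*`. -/
def odot (x y : X) : X := A.neg (A.imp x (A.neg y))

/-- `x ⊕ y := (x* ⊙ y*)*`. -/
def oplus (x y : X) : X := A.neg (A.odot (A.neg x) (A.neg y))

/-- `x ≤_Q y` iff `x = x ⊓ y`. -/
def leQ (x y : X) : Prop := x = A.inf x y

/-- `x ≤ y` iff `x → y = 1`. -/
def le (x y : X) : Prop := A.imp x y = A.one

/-- (IOM): `x ⊓ (y → x) = x` for all `x, y`. -/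
def IOM : Prop := ∀ x y, A.inf x (A.imp y x) = x

/-- (QW): `x → ((x ⊓ y) ⊓ (z ⊓ x)) = (x → y) ⊓ (x → z)` for all `x, y, z`. -/
def QW : Prop :=
  ∀ x y z, A.imp x (A.inf (A.inf x y) (A.inf z x)) = A.inf (A.imp x y) (A.imp x z)

/-- A filter: nonempty, closed under `⊙`, upward closed for `≤_Q`. -/
def IsFilter (F : Set X) : Prop :=
  F.Nonempty ∧ (∀ x ∈ F, ∀ y ∈ F, A.odot x y ∈ F) ∧
    (∀ x ∈ F, ∀ y : X, A.leQ x y → y ∈ F)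

/-- A deductive system: contains `1` and is closed under modus ponens. -/
def IsDS (F : Set X) : Prop :=
  A.one ∈ F ∧ ∀ x y : X, x ∈ F → A.imp x y ∈ F → y ∈ F

/-- `pow x n` is the `⊙`-product of `n + 1` copies of `x`, i.e. `x^(n+1)`. -/
def pow (x : X) : ℕ → X
  | 0 => x
  | n + 1 => A.odot x (pow x n)

/-- A maximal filter: proper and not contained in any other proper filter. -/
def IsMaximalFilter (F : Set X) : Prop :=
  A.IsFilter F ∧ F ≠ Set.univ ∧
    ∀ G : Set X, A.IsFilter G → F ⊆ G → G ≠ Set.univ → G = F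

/-- A strongly maximal filter: for every `x ∉ F` there is `n ≥ 1` with `(xⁿ)* ∈ F`. -/
def IsStronglyMaximalFilter (F : Set X) : Prop :=
  A.IsFilter F ∧ ∀ x : X, x ∉ F → ∃ n : ℕ, A.neg (A.pow x n) ∈ F

/-- `x ≡_F y` iff there is `f` with `x, y ≤_Q f` and `f → x, f → y ∈ F`. -/
def cong (F : Set X) (x y : X) : Prop :=
  ∃ f : X, A.leQ x f ∧ A.leQ y f ∧ A.imp f x ∈ F ∧ A.imp f y ∈ F

end InvBE

namespace InvBE

variable {X : Type*} (A : InvBE X)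

theorem neg_neg (x : X) : A.neg (A.neg x) = x := A.imp_involutive x

theorem imp_neg_comm (x y : X) : A.imp x (A.neg y) = A.imp y (A.neg x) :=
  A.exchange x y A.zero

theorem neg_imp_neg (x y : X) : A.imp (A.neg x) (A.neg y) = A.imp y x := by
  rw [imp_neg_comm, neg_neg]

theorem inf_eq (x y : X) : A.inf y x = A.neg (A.imp (A.imp x y) (A.neg x)) := by
  rw [inf, neg_imp_neg]

theorem le_iff_inf_eq (x y : X) : A.le x y ↔ A.inf y x = x := by
  constructor
  · intro h
    rw [inf_eq, show A.imp x y = A.one from h, A.one_imp, neg_neg]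
  · intro h
    have hu : A.imp (A.imp x y) (A.neg x) = A.neg x := by
      rw [← A.neg_neg (A.imp (A.imp x y) (A.neg x)), ← inf_eq, h]
    calc A.imp x y = A.imp (A.neg y) (A.neg x) := (A.neg_imp_neg y x).symm
      _ = A.imp (A.neg y) (A.imp (A.imp x y) (A.neg x)) := by rw [hu]
      _ = A.imp (A.neg y) (A.imp x (A.neg (A.imp x y))) := by rw [A.imp_neg_comm x]
      _ = A.imp x (A.imp (A.neg y) (A.neg (A.imp x y))) := A.exchange _ _ _
      _ = A.imp x (A.imp (A.imp x y) y) := by rw [A.neg_imp_neg]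
      _ = A.imp (A.imp x y) (A.imp x y) := A.exchange _ _ _
      _ = A.one := A.imp_self _

end InvBE

/-- In an IOM algebra: (i) `x ≤ y` iff `y ⊓ x = x`; (ii) `x ≤_Q y` and `y ≤ x` imply `x = y`. -/
theorem stmt_7 {X : Type*} (A : InvBE X) (hA : A.IOM) :
    (∀ x y : X, A.le x y ↔ A.inf y x = x) ∧
      (∀ x y : X, A.leQ x y → A.le y x → x = y) := by
  exact ⟨A.le_iff_inf_eq, fun x y hQ h => Eq.trans hQ ((A.le_iff_inf_eq y x).1 h)⟩
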